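/- Let l ≥ 3, let α ∈ R^l be an admissible function, and let 1 ≤ i < j ≤ l. Then ord_{ij}α ≥ −4; and if moreover α ∈ R₀^l is indecomposable, then ord_{ij}α ≥ −2. -/

import Mathlib

open scoped Classical

noncomputable section

namespace Griess

open MvPolynomial

variable {k : Type} [Field k]

/-- The field `k(z₁,…,z_l)` of rational functions over `k` in `l` variables. -/
abbrev RF (k : Type) [Field k] (l : ℕ) : Type := FractionRing (MvPolynomial (Fin l) k)

/-- The variable `zᵢ` as an element of the rational function field. -/
def zv {k : Type} [Field k] {l : ℕ} (i : Fin l) : RF k l :=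
  algebraMap (MvPolynomial (Fin l) k) (RF k l) (MvPolynomial.X i)

/-- The space `Φ^l` of rational functions of the form
`p(z₁,…,z_l) · ∏_{i<j} (zᵢ - z_j)^{k_{ij}}`. -/
def Phi (k : Type) [Field k] (l : ℕ) : Set (RF k l) :=
  { x | ∃ (p : MvPolynomial (Fin l) k) (e : Fin l → Fin l → ℤ),
      x = algebraMap (MvPolynomial (Fin l) k) (RF k l) p *
        ∏ i : Fin l, ∏ j : Fin l, (if i < j then (zv i - zv j) ^ e i j else 1) }

/-- `D` is the family of partial derivative operators `∂_{z₁},…,∂_{z_l}`: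
a family of `k`-linear derivations with `D i (z j) = δ_{ij}`. -/
def IsPartialDeriv {l : ℕ} (D : Fin l → Derivation k (RF k l) (RF k l)) : Prop :=
  ∀ i j : Fin l, D i (zv j) = if j = i then 1 else 0

/-- The operator `Δ = Σᵢ ∂_{zᵢ}`. -/
def Delta {l : ℕ} (D : Fin l → Derivation k (RF k l) (RF k l)) (α : RF k l) : RF k l :=
  ∑ i, D i α

/-- The operator `Δ*(n₁,…,n_l) = Σᵢ (zᵢ² ∂_{zᵢ} + nᵢ zᵢ)`. -/
def DeltaStar {l : ℕ} (D : Fin l → Derivation k (RF k l) (RF k l)) (n : Fin l → ℤ)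
    (α : RF k l) : RF k l :=
  ∑ i, ((zv i) ^ 2 * D i α + (n i : RF k l) * zv i * α)

section Subst

variable {l : ℕ}

/-- The embedding of polynomials in `z₁,…,z_l` into rational functions of
`z₁,…,z_l` and one extra variable `t` (`= RatFunc.X`). -/
def toRatFuncHom (k : Type) [Field k] (l : ℕ) :
    Polynomial (MvPolynomial (Fin l) k) →+* RatFunc (RF k l) :=
  (algebraMap (Polynomial (RF k l)) (RatFunc (RF k l))).comp
    (Polynomial.mapRingHom (algebraMap (MvPolynomial (Fin l) k) (RF k l)))

lemma toRatFuncHom_injective : Function.Injective (toRatFuncHom k l) := by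
  have h1 : Function.Injective (algebraMap (Polynomial (RF k l)) (RatFunc (RF k l))) :=
    IsFractionRing.injective _ _
  have h2 : Function.Injective
      (Polynomial.mapRingHom (algebraMap (MvPolynomial (Fin l) k) (RF k l))) :=
    Polynomial.map_injective _ (IsFractionRing.injective _ _)
  exact fun a b hab => h2 (h1 hab)

/-- Polynomial level substitution `z_j ↦ t·z_j` for `j ∈ J`. -/
def scaleAux (k : Type) [Field k] (l : ℕ) (J : Finset (Fin l)) :
    MvPolynomial (Fin l) k →+* Polynomial (MvPolynomial (Fin l) k) :=
  (MvPolynomial.aeval (R := k) fun i =>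
    if i ∈ J then Polynomial.X * Polynomial.C (MvPolynomial.X i)
    else Polynomial.C (MvPolynomial.X i)).toRingHom

lemma scaleAux_injective (J : Finset (Fin l)) :
    Function.Injective (scaleAux k l J) := by
  have h : (Polynomial.evalRingHom (1 : MvPolynomial (Fin l) k)).comp (scaleAux k l J)
      = RingHom.id _ := by
    apply MvPolynomial.ringHom_ext
    · intro r; simp [scaleAux]
    · intro i; by_cases hi : i ∈ J <;> simp [scaleAux, hi]
  intro p q hpq
  have hp := DFunLike.congr_fun h p
  have hq := DFunLike.congr_fun h q
  simp only [RingHom.comp_apply, RingHom.id_apply] at hp hq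
  rw [← hp, ← hq, hpq]

/-- The substitution `z_j ↦ t·z_j` (for `j ∈ J`), as a map from rational functions
in `z₁,…,z_l` to rational functions in `z₁,…,z_l` and `t`.  Reading off the
coefficients of the Laurent expansion in `t` at `t = 0` of `scaleJ J α` yields the
decomposition of `α` into its homogeneous components with respect to the total degree
in the variables `{z_j : j ∈ J}`, i.e. the expansion of `α` in the domain where the
variables of `J` are much smaller than the remaining variables. -/
def scaleJ (J : Finset (Fin l)) : RF k l →+* RatFunc (RF k l) :=
  IsFractionRing.lift (g := (toRatFuncHom k l).comp (scaleAux k l J))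
    (fun a b hab => scaleAux_injective J (toRatFuncHom_injective hab))

/-- Polynomial level substitution `z_i ↦ z_j + t`. -/
def subPairAux (k : Type) [Field k] (l : ℕ) (i j : Fin l) :
    MvPolynomial (Fin l) k →+* Polynomial (MvPolynomial (Fin l) k) :=
  (MvPolynomial.aeval (R := k) fun s =>
    if s = i then Polynomial.X + Polynomial.C (MvPolynomial.X j)
    else Polynomial.C (MvPolynomial.X s)).toRingHom

lemma subPairAux_injective (i j : Fin l) :
    Function.Injective (subPairAux k l i j) := by
  have h : (Polynomial.evalRingHom (MvPolynomial.X i - MvPolynomial.X j)).comp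
      (subPairAux k l i j) = RingHom.id _ := by
    apply MvPolynomial.ringHom_ext
    · intro r; simp [subPairAux]
    · intro s; by_cases hs : s = i <;> simp [subPairAux, hs]
  intro p q hpq
  have hp := DFunLike.congr_fun h p
  have hq := DFunLike.congr_fun h q
  simp only [RingHom.comp_apply, RingHom.id_apply] at hp hq
  rw [← hp, ← hq, hpq]

/-- The substitution `z_i ↦ z_j + t`, as a map from rational functions in `z₁,…,z_l`
to rational functions in the variables `z₁,…,z_l` and `t`.  Reading off the Laurent
coefficients in `t` at `t = 0` yields the expansion of a rational function in powers
of `z_i - z_j`, with coefficients not involving `z_i`. -/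
def subPair (i j : Fin l) : RF k l →+* RatFunc (RF k l) :=
  IsFractionRing.lift (g := (toRatFuncHom k l).comp (subPairAux k l i j))
    (fun a b hab => subPairAux_injective i j (toRatFuncHom_injective hab))

end Subst

/-- The coefficient of `tᵐ` in the Laurent expansion at `t = 0` of a rational
function of `t`. -/
def lcoeff {L : Type} [Field L] (m : ℤ) (f : RatFunc L) : L :=
  (f : LaurentSeries L).coeff m

/-- The component `(α)_n` of `α` of degree `n` with respect to the partition
`{1,…,l} = Jᶜ ⊔ J` and the weights `d`:  the part of the expansion of `α` in the
domain where the variables of `J` are much smaller than those of `Jᶜ` whose total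
degree in the variables `{z_j : j ∈ J}` equals `n - Σ_{j∈J} d_j`. -/
def component {l : ℕ} (J : Finset (Fin l)) (d : Fin l → ℤ) (n : ℤ) (α : RF k l) :
    RF k l :=
  lcoeff (n - ∑ j ∈ J, d j) (scaleJ J α)

/-- `α` is homogeneous of total degree `d` in the variables `{z_i : i ∈ S}`:
substituting `z_i ↦ t·z_i` for `i ∈ S` multiplies `α` by `t^d`. -/
def IsHomogeneousOn {l : ℕ} (S : Finset (Fin l)) (d : ℤ) (α : RF k l) : Prop :=
  scaleJ S α = RatFunc.X ^ d * RatFunc.C α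

/-- `ρ^{(m)}_{ij} α`: the coefficient of `(z_i - z_j)^m` in the expansion of `α`
in powers of `z_i - z_j` (the coefficients do not involve `z_i`). -/
def rho {l : ℕ} (i j : Fin l) (m : ℤ) (α : RF k l) : RF k l :=
  lcoeff m (subPair i j α)

/-- `α` is a rational function of the variables `{z_i : i ∈ S}` only. -/
def dependsOnlyOn {l : ℕ} (S : Finset (Fin l)) (α : RF k l) : Prop :=
  α ∈ Subfield.closure (Set.range (algebraMap k (RF k l)) ∪ {x | ∃ i ∈ S, x = zv i})

/-- `α` is an admissible function of the variables `{z_i : i ∈ S}` (the space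
`R^{|S|}`):  `α ∈ Φ` is a rational function of the variables of `S` only, it is
`(4,…,4)`-regular and homogeneous of degree `-2|S|` in these variables, and all its
components of negative degree, as well as those of degree `1`, vanish (with respect
to every partition of `S` and all weights equal to `2`). -/
def Admissible {l : ℕ} (D : Fin l → Derivation k (RF k l) (RF k l)) (S : Finset (Fin l))
    (α : RF k l) : Prop :=
  α ∈ Phi k l ∧ dependsOnlyOn S α ∧
    (∑ i ∈ S, ((zv i) ^ 2 * D i α + 4 * zv i * α)) = 0 ∧
    IsHomogeneousOn S (-(2 * (S.card : ℤ))) α ∧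
    ∀ J ⊆ S, ∀ n : ℤ, (n < 0 ∨ n = 1) → component J (fun _ => 2) n α = 0

/-- `α` is an indecomposable admissible function of the variables `{z_i : i ∈ S}`
(the space `R₀^{|S|}`): admissible, and all the components `(α)₀` with respect to
partitions of `S` into two nonempty parts vanish. -/
def AdmissibleInd {l : ℕ} (D : Fin l → Derivation k (RF k l) (RF k l))
    (S : Finset (Fin l)) (α : RF k l) : Prop :=
  Admissible D S α ∧
    ∀ J ⊆ S, J ≠ ∅ → J ≠ S → component J (fun _ => 2) 0 α = 0

section Shift

variable {l : ℕ}

/-- Polynomial level substitution `z_s ↦ z_s - z_t` for `s ∈ S`. -/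
def shiftAuxP (k : Type) [Field k] (l : ℕ) (S : Finset (Fin l)) (t : Fin l) :
    MvPolynomial (Fin l) k →+* MvPolynomial (Fin l) k :=
  (MvPolynomial.aeval (R := k) fun s =>
    if s ∈ S then MvPolynomial.X s - MvPolynomial.X t else MvPolynomial.X s).toRingHom

lemma shiftAuxP_injective (S : Finset (Fin l)) (t : Fin l) (ht : t ∉ S) :
    Function.Injective (shiftAuxP k l S t) := by
  have h : ((MvPolynomial.aeval (R := k) fun s =>
      if s ∈ S then MvPolynomial.X s + MvPolynomial.X t
      else MvPolynomial.X s).toRingHom).comp (shiftAuxP k l S t) = RingHom.id _ := by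
    apply MvPolynomial.ringHom_ext
    · intro r; simp [shiftAuxP]
    · intro s
      by_cases hs : s ∈ S
      · have hst : s ≠ t := fun hst => ht (hst ▸ hs)
        simp [shiftAuxP, hs, ht]
      · simp [shiftAuxP, hs]
  intro p q hpq
  have hp := DFunLike.congr_fun h p
  have hq := DFunLike.congr_fun h q
  simp only [RingHom.comp_apply, RingHom.id_apply] at hp hq
  rw [← hp, ← hq, hpq]

/-- The shift operator substituting `z_s - z_t` for `z_s`, for all `s ∈ S`. -/
def shiftT (S : Finset (Fin l)) (t : Fin l) (ht : t ∉ S) : RF k l →+* RF k l :=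
  IsFractionRing.lift
    (g := (algebraMap (MvPolynomial (Fin l) k) (RF k l)).comp (shiftAuxP k l S t))
    (fun a b hab =>
      shiftAuxP_injective S t ht (IsFractionRing.injective _ _ hab))

/-- The operator `ℰ = Σ_{s ∈ S} (-z_s⁻¹ ∂_{z_s} + 2 z_s⁻²)`. -/
def curlyE {l : ℕ} (D : Fin l → Derivation k (RF k l) (RF k l)) (S : Finset (Fin l))
    (β : RF k l) : RF k l :=
  ∑ s ∈ S, (-((zv s)⁻¹ * D s β) + 2 * (zv s) ^ (-2 : ℤ) * β)

end Shift

end Griess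

namespace Griess

section HelpersOrd
open scoped RatFunc

/-- `f` is nonzero of Laurent order `m` at `0`. -/
def HasOrd {L : Type} [Field L] (f : RatFunc L) (m : ℤ) : Prop :=
  f ≠ 0 ∧ HahnSeries.order (f : LaurentSeries L) = m

lemma coe_ne_zero' {L : Type} [Field L] {f : RatFunc L} (h : f ≠ 0) :
    (algebraMap (RatFunc L) (LaurentSeries L)) f ≠ 0 := by
  simpa using h

lemma HasOrd.mul {L : Type} [Field L] {f g : RatFunc L} {m n : ℤ}
    (hf : HasOrd f m) (hg : HasOrd g n) : HasOrd (f * g) (m + n) := by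
  refine ⟨mul_ne_zero hf.1 hg.1, ?_⟩
  have := HahnSeries.order_mul (coe_ne_zero' hf.1) (coe_ne_zero' hg.1)
  rw [← map_mul] at this
  rw [← hf.2, ← hg.2]
  exact this

lemma HasOrd.one {L : Type} [Field L] : HasOrd (1 : RatFunc L) 0 := by
  refine ⟨one_ne_zero, ?_⟩
  have : (algebraMap (RatFunc L) (LaurentSeries L)) 1 = 1 := map_one _
  exact (congrArg HahnSeries.order this).trans HahnSeries.order_one

lemma HasOrd.inv {L : Type} [Field L] {f : RatFunc L} {m : ℤ}
    (hf : HasOrd f m) : HasOrd f⁻¹ (-m) := by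
  have hi : f⁻¹ ≠ 0 := inv_ne_zero hf.1
  have h : HasOrd f⁻¹ _ := ⟨hi, rfl⟩
  have h2 := (hf.mul h).2
  rw [mul_inv_cancel₀ hf.1, HasOrd.one.2] at h2
  exact ⟨hi, by linarith⟩

lemma HasOrd.pow {L : Type} [Field L] {f : RatFunc L} {m : ℤ}
    (hf : HasOrd f m) (n : ℕ) : HasOrd (f ^ n) (n * m) := by
  induction n with
  | zero => simpa using HasOrd.one
  | succ n ih =>
    have := ih.mul hf
    rw [← pow_succ] at this
    convert this using 1
    push_cast; ring

lemma HasOrd.zpow {L : Type} [Field L] {f : RatFunc L} {m : ℤ}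
    (hf : HasOrd f m) (n : ℤ) : HasOrd (f ^ n) (n * m) := by
  obtain ⟨n, rfl | rfl⟩ := n.eq_nat_or_neg
  · simpa using hf.pow n
  · have := (hf.pow n).inv
    rw [zpow_neg, zpow_natCast]
    convert this using 1
    ring

lemma HasOrd.prod {L : Type} [Field L] {ι : Type} (s : Finset ι) {f : ι → RatFunc L} {m : ι → ℤ}
    (hf : ∀ a ∈ s, HasOrd (f a) (m a)) : HasOrd (∏ a ∈ s, f a) (∑ a ∈ s, m a) := by
  induction s using Finset.induction_on with
  | empty => simpa using HasOrd.one
  | insert a s ha ih =>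
    rw [Finset.prod_insert ha, Finset.sum_insert ha]
    exact (hf a (by simp)).mul (ih fun b hb => hf b (by simp [hb]))

lemma HasOrd.lcoeff_ne {L : Type} [Field L] {f : RatFunc L} {m : ℤ}
    (hf : HasOrd f m) : lcoeff m f ≠ 0 := by
  unfold lcoeff
  rw [← hf.2, Ne, HahnSeries.coeff_order_eq_zero]
  exact coe_ne_zero' hf.1

lemma HasOrd.lcoeff_lt {L : Type} [Field L] {f : RatFunc L} {m : ℤ}
    (hf : HasOrd f m) {n : ℤ} (h : n < m) : lcoeff n f = 0 := by
  unfold lcoeff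
  exact HahnSeries.coeff_eq_zero_of_lt_order (by rw [hf.2]; exact h)

lemma lcoeff_poly {L : Type} [Field L] (F : Polynomial L) (n : ℤ) :
    lcoeff n (algebraMap (Polynomial L) (RatFunc L) F) =
      if n < 0 then 0 else F.coeff n.natAbs := by
  unfold lcoeff
  have h := RatFunc.coe_coe F
  have h2 : ((F : RatFunc L) : LaurentSeries L) =
    algebraMap (RatFunc L) (LaurentSeries L) (algebraMap (Polynomial L) (RatFunc L) F) := rfl
  rw [← h2, ← h, PowerSeries.coeff_coe]
  simp

lemma hasOrd_poly {L : Type} [Field L] (F : Polynomial L) (h : F.coeff 0 ≠ 0) :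
    HasOrd (algebraMap (Polynomial L) (RatFunc L) F) 0 := by
  have hF : F ≠ 0 := by rintro rfl; simp at h
  have hne : algebraMap (Polynomial L) (RatFunc L) F ≠ 0 := by simpa using hF
  refine ⟨hne, ?_⟩
  have hc := HahnSeries.coeff_order_eq_zero.not.mpr (coe_ne_zero' hne)
  have h0 := lcoeff_poly F
  unfold lcoeff at h0
  apply le_antisymm
  · apply HahnSeries.order_le_of_coeff_ne_zero
    rw [h0 0]; simpa using h
  · by_contra hlt
    push Not at hlt
    apply hc
    rw [h0, if_pos hlt]

lemma hasOrd_X {L : Type} [Field L] : HasOrd (RatFunc.X : RatFunc L) 1 := by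
  refine ⟨RatFunc.X_ne_zero, ?_⟩
  rw [RatFunc.coe_X]
  exact HahnSeries.order_single one_ne_zero

lemma hasOrd_toRF {k : Type} [Field k] {l : ℕ} (F : Polynomial (MvPolynomial (Fin l) k))
    (h : F.coeff 0 ≠ 0) : HasOrd (toRatFuncHom k l F) 0 := by
  apply hasOrd_poly
  simpa using h

lemma hasOrd_toRF_X {k : Type} [Field k] {l : ℕ} (u : MvPolynomial (Fin l) k)
    (h : u ≠ 0) : HasOrd (toRatFuncHom k l (Polynomial.X * Polynomial.C u)) 1 := by
  rw [map_mul]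
  have h1 : HasOrd (toRatFuncHom k l Polynomial.X) 1 := by
    have : toRatFuncHom k l Polynomial.X = RatFunc.X := by simp [toRatFuncHom]
    rw [this]; exact hasOrd_X
  have h2 := hasOrd_toRF (k := k) (Polynomial.C u) (by simpa using h)
  simpa using h1.mul h2

/-- The discriminant-type product. -/
def PP (k : Type) [Field k] (l : ℕ) (e : Fin l → Fin l → ℤ) : RF k l :=
  ∏ i : Fin l, ∏ j : Fin l, (if i < j then (zv i - zv j) ^ e i j else 1)

lemma hasOrd_main {k : Type} [Field k] {l : ℕ}
    (φ : MvPolynomial (Fin l) k →+* Polynomial (MvPolynomial (Fin l) k))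
    (Φ : RF k l →+* RatFunc (RF k l))
    (hΦ : ∀ p, Φ (algebraMap _ _ p) = toRatFuncHom k l (φ p))
    (i j : Fin l) (hij : i < j) (u : MvPolynomial (Fin l) k) (hu : u ≠ 0)
    (h1 : φ (MvPolynomial.X i - MvPolynomial.X j) = Polynomial.X * Polynomial.C u)
    (h2 : ∀ a b : Fin l, a < b → ¬ (a = i ∧ b = j) →
      (φ (MvPolynomial.X a - MvPolynomial.X b)).coeff 0 ≠ 0)
    (p : MvPolynomial (Fin l) k) (hp : (φ p).coeff 0 ≠ 0) (e : Fin l → Fin l → ℤ) :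
    HasOrd (Φ (algebraMap _ _ p * PP k l e)) (e i j) := by
  have hz : ∀ a b : Fin l, Φ (zv a - zv b) =
      toRatFuncHom k l (φ (MvPolynomial.X a - MvPolynomial.X b)) := by
    intro a b; rw [← hΦ, map_sub (algebraMap (MvPolynomial (Fin l) k) (RF k l))]; rfl
  have hP : HasOrd (Φ (PP k l e)) (∑ a, ∑ b, if a = i ∧ b = j then e i j else 0) := by
    unfold PP
    rw [map_prod]
    apply HasOrd.prod
    intro a _
    rw [map_prod]
    apply HasOrd.prod
    intro b _
    by_cases hab : a < b
    · rw [if_pos hab, map_zpow₀, hz]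
      by_cases hc : a = i ∧ b = j
      · obtain ⟨rfl, rfl⟩ := hc
        rw [h1]
        simpa using (hasOrd_toRF_X u hu).zpow (e a b)
      · rw [if_neg hc]
        simpa using (hasOrd_toRF _ (h2 a b hab hc)).zpow (e a b)
    · rw [if_neg hab, map_one, if_neg]
      · exact HasOrd.one
      · rintro ⟨rfl, rfl⟩; exact hab hij
  have hs : (∑ a, ∑ b, if a = i ∧ b = j then e i j else 0) = e i j := by
    simp [ite_and]
  rw [hs] at hP
  rw [map_mul, hΦ]
  simpa using (hasOrd_toRF _ hp).mul hP

end HelpersOrd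

lemma deriv_ext {k : Type} [Field k] {l : ℕ} (E F : Derivation k (RF k l) (RF k l))
    (h : ∀ a, E (zv a) = F (zv a)) : E = F := by
  have hp : ∀ p : MvPolynomial (Fin l) k, E (algebraMap _ _ p) = F (algebraMap _ _ p) := by
    intro p
    induction p using MvPolynomial.induction_on with
    | C c =>
      have : algebraMap (MvPolynomial (Fin l) k) (RF k l) (MvPolynomial.C c) =
        algebraMap k (RF k l) c := by
        rw [IsScalarTower.algebraMap_apply k (MvPolynomial (Fin l) k) (RF k l)]; rfl
      rw [this, Derivation.map_algebraMap, Derivation.map_algebraMap]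
    | add p q hp hq => simp only [map_add, hp, hq]
    | mul_X p a hp =>
      have := h a
      unfold zv at this
      rw [map_mul (algebraMap (MvPolynomial (Fin l) k) (RF k l)), Derivation.leibniz,
        Derivation.leibniz, this, hp]
  ext x
  obtain ⟨a, b, hb, rfl⟩ := IsFractionRing.div_surjective (A := MvPolynomial (Fin l) k) x
  rw [Derivation.leibniz_div, Derivation.leibniz_div, hp, hp]

/-- The derivation `∑ zᵢ^n ∂ᵢ`. -/
def WW {k : Type} [Field k] {l : ℕ} (D : Fin l → Derivation k (RF k l) (RF k l)) (n : ℕ) :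
    Derivation k (RF k l) (RF k l) := ∑ i, (zv i : RF k l) ^ n • D i

lemma WW_apply {k : Type} [Field k] {l : ℕ} (D : Fin l → Derivation k (RF k l) (RF k l)) (n : ℕ)
    (x : RF k l) : WW D n x = ∑ i, (zv i) ^ n * D i x := by
  unfold WW
  have h := map_sum (Derivation.coeFnAddMonoidHom (R := k) (A := RF k l) (M := RF k l))
    (fun i => (zv i : RF k l) ^ n • D i) Finset.univ
  have h2 := congrFun h x
  rw [Finset.sum_apply] at h2
  exact h2

lemma WW_zv {k : Type} [Field k] {l : ℕ} (D : Fin l → Derivation k (RF k l) (RF k l))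
    (hD : IsPartialDeriv D) (n : ℕ) (a : Fin l) : WW D n (zv a) = zv a ^ n := by
  rw [WW_apply]
  simp [hD _ a]

lemma comm01 {k : Type} [Field k] {l : ℕ} (D : Fin l → Derivation k (RF k l) (RF k l))
    (hD : IsPartialDeriv D) (x : RF k l) :
    WW D 0 (WW D 1 x) = WW D 1 (WW D 0 x) + WW D 0 x := by
  have : ⁅WW D 0, WW D 1⁆ = WW D 0 := by
    apply deriv_ext
    intro a
    rw [Derivation.commutator_apply]
    simp [WW_zv D hD]
  have h2 := congrArg (fun E => E x) this
  simp only [Derivation.commutator_apply] at h2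
  linear_combination h2

lemma comm02 {k : Type} [Field k] {l : ℕ} (D : Fin l → Derivation k (RF k l) (RF k l))
    (hD : IsPartialDeriv D) (x : RF k l) :
    WW D 0 (WW D 2 x) = WW D 2 (WW D 0 x) + 2 * WW D 1 x := by
  have : ⁅WW D 0, WW D 2⁆ = (2 : RF k l) • WW D 1 := by
    apply deriv_ext
    intro a
    rw [Derivation.commutator_apply, Derivation.smul_apply]
    simp only [WW_zv D hD]
    rw [Derivation.leibniz_pow]
    simp [WW_zv D hD]
  have h2 := congrArg (fun E => E x) this
  simp only [Derivation.commutator_apply, Derivation.smul_apply, smul_eq_mul] at h2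
  linear_combination h2

/-- The regularity operator. -/
def EE {k : Type} [Field k] {l : ℕ} (D : Fin l → Derivation k (RF k l) (RF k l))
    (x : RF k l) : RF k l := WW D 2 x + 4 * (∑ i, zv i) * x

lemma comm_E {k : Type} [Field k] {l : ℕ} (D : Fin l → Derivation k (RF k l) (RF k l))
    (hD : IsPartialDeriv D) (x : RF k l) :
    EE D (WW D 0 x) = WW D 0 (EE D x) - 2 * WW D 1 x - 4 * l * x := by
  have h4 : WW D 0 (4 * (∑ i, zv i)) = 4 * (l : RF k l) := by
    have : (4 : RF k l) * (∑ i, zv i) = (4 : ℕ) • (∑ i, zv i) := by simp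
    rw [this, map_nsmul, map_sum]
    simp [WW_zv D hD]
  unfold EE
  rw [map_add, comm02 D hD, Derivation.leibniz, h4]
  simp only [smul_eq_mul]
  ring

lemma sl2 {k : Type} [Field k] [CharZero k] {l : ℕ} (D : Fin l → Derivation k (RF k l) (RF k l))
    (hD : IsPartialDeriv D) (x : RF k l) (h1 : EE D x = 0)
    (h2 : WW D 1 x = -(2 * l) * x) (N : ℕ) (hN : (WW D 0)^[N] x = 0) : WW D 0 x = 0 := by
  haveI : CharZero (RF k l) := charZero_of_injective_algebraMap (algebraMap k (RF k l)).injective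
  have hE : ∀ N : ℕ, WW D 1 ((WW D 0)^[N] x) = (-(2 * l) - N) * ((WW D 0)^[N] x) := by
    intro N
    induction N with
    | zero => simpa using h2
    | succ N ih =>
      rw [Function.iterate_succ_apply']
      have := comm01 D hD ((WW D 0)^[N] x)
      rw [ih] at this
      have h3 : WW D 0 ((-(2 * (l : RF k l)) - N) * ((WW D 0)^[N] x)) =
        (-(2 * l) - N) * WW D 0 ((WW D 0)^[N] x) := by
        have : (-(2 * (l : RF k l)) - N) * ((WW D 0)^[N] x) =
          (-(2 * (l : ℤ)) - N : ℤ) • ((WW D 0)^[N] x) := by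
          rw [zsmul_eq_mul]; push_cast; rfl
        rw [this, map_zsmul, zsmul_eq_mul]; push_cast; rfl
      rw [h3] at this
      push_cast
      linear_combination -this
  have hQ : ∀ N : ℕ, EE D ((WW D 0)^[N + 1] x) = (N * (N + 1)) * ((WW D 0)^[N] x) := by
    intro N
    induction N with
    | zero =>
      rw [Function.iterate_succ_apply', comm_E D hD]
      simp only [Function.iterate_zero, id]
      rw [h1, h2]
      simp
      ring
    | succ N ih =>
      rw [Function.iterate_succ_apply', comm_E D hD, ih, hE]
      have : WW D 0 (((N : RF k l) * (N + 1)) * ((WW D 0)^[N] x)) =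
          (N * (N + 1)) * ((WW D 0)^[N + 1] x) := by
        have : ((N : RF k l) * (N + 1)) * ((WW D 0)^[N] x) =
          (N * (N + 1) : ℕ) • ((WW D 0)^[N] x) := by
          rw [nsmul_eq_mul]; push_cast; rfl
        rw [this, map_nsmul, nsmul_eq_mul, Function.iterate_succ_apply']; push_cast; rfl
      rw [this]
      push_cast
      ring
  induction N with
  | zero => simp at hN; simp [hN]
  | succ N ih =>
    rcases Nat.eq_zero_or_pos N with rfl | hpos
    · simpa using hN
    · apply ih
      have := hQ N
      rw [hN] at this
      have h0 : EE D (0 : RF k l) = 0 := by simp [EE]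
      rw [h0] at this
      have hn : (N : RF k l) * (N + 1) ≠ 0 := by
        apply mul_ne_zero
        · exact_mod_cast hpos.ne'
        · exact_mod_cast Nat.succ_ne_zero N
      exact (mul_eq_zero.mp this.symm).resolve_left hn

/-- The derivation `∑ ∂ᵢ` on polynomials. -/
def dd (k : Type) [Field k] (l : ℕ) :
    Derivation k (MvPolynomial (Fin l) k) (MvPolynomial (Fin l) k) :=
  MvPolynomial.mkDerivation k (fun _ => 1)

lemma dd_X {k : Type} [Field k] {l : ℕ} (a : Fin l) : dd k l (MvPolynomial.X a) = 1 := by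
  simp [dd, MvPolynomial.mkDerivation_X]

lemma dd_alg {k : Type} [Field k] {l : ℕ} (D : Fin l → Derivation k (RF k l) (RF k l))
    (hD : IsPartialDeriv D) (p : MvPolynomial (Fin l) k) :
    WW D 0 (algebraMap _ _ p) = algebraMap _ _ (dd k l p) := by
  induction p using MvPolynomial.induction_on with
  | C c =>
    have : algebraMap (MvPolynomial (Fin l) k) (RF k l) (MvPolynomial.C c) =
      algebraMap k (RF k l) c := by
      rw [IsScalarTower.algebraMap_apply k (MvPolynomial (Fin l) k) (RF k l)]; rfl
    rw [this, Derivation.map_algebraMap]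
    simp [dd]
  | add p q hp hq => simp only [map_add, hp, hq]
  | mul_X p a hp =>
    have := WW_zv D hD 0 a
    unfold zv at this
    rw [map_mul (algebraMap (MvPolynomial (Fin l) k) (RF k l)), Derivation.leibniz,
      Derivation.leibniz, this, hp, dd_X]
    simp

lemma dd_nil {k : Type} [Field k] {l : ℕ} (p : MvPolynomial (Fin l) k) :
    ∃ N, ∀ n, N ≤ n → (dd k l)^[n] p = 0 := by
  have it0 : ∀ n, (dd k l)^[n] 0 = 0 := by
    intro n; induction n with
    | zero => rfl
    | succ n ih => rw [Function.iterate_succ_apply', ih, map_zero]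
  induction p using MvPolynomial.induction_on with
  | C c =>
    refine ⟨1, fun n hn => ?_⟩
    obtain ⟨m, rfl⟩ : ∃ m, n = m + 1 := ⟨n - 1, by omega⟩
    rw [Function.iterate_succ_apply]
    have : dd k l (MvPolynomial.C c) = 0 := by simp [dd]
    rw [this, it0]
  | add p q hp hq =>
    obtain ⟨N, hN⟩ := hp
    obtain ⟨M, hM⟩ := hq
    refine ⟨max N M, fun n hn => ?_⟩
    rw [iterate_map_add, hN n (le_trans (le_max_left _ _) hn),
      hM n (le_trans (le_max_right _ _) hn), add_zero]
  | mul_X p a hp =>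
    obtain ⟨N, hN⟩ := hp
    have key : ∀ n, (dd k l)^[n + 1] (p * MvPolynomial.X a) =
        (dd k l)^[n + 1] p * MvPolynomial.X a + (n + 1 : ℕ) • (dd k l)^[n] p := by
      intro n
      induction n with
      | zero => simp [dd_X]; ring
      | succ n ih =>
        rw [Function.iterate_succ_apply', ih, map_add, map_nsmul, Derivation.leibniz, dd_X,
          ← Function.iterate_succ_apply' (dd k l), ← Function.iterate_succ_apply' (dd k l)]
        simp
        ring
    refine ⟨N + 1, fun n hn => ?_⟩
    obtain ⟨m, rfl⟩ : ∃ m, n = m + 1 := ⟨n - 1, by omega⟩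
    rw [key, hN m (by omega), hN (m + 1) (by omega)]
    simp


lemma scaleJ_alg {k : Type} [Field k] {l : ℕ} (J : Finset (Fin l)) (p : MvPolynomial (Fin l) k) :
    scaleJ J (algebraMap _ _ p) = toRatFuncHom k l (scaleAux k l J p) := by
  exact IsFractionRing.lift_algebraMap (g := (toRatFuncHom k l).comp (scaleAux k l J))
    (fun a b hab => scaleAux_injective J (toRatFuncHom_injective hab)) p

lemma subPair_alg {k : Type} [Field k] {l : ℕ} (i j : Fin l) (p : MvPolynomial (Fin l) k) :
    subPair i j (algebraMap _ _ p) = toRatFuncHom k l (subPairAux k l i j p) := by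
  exact IsFractionRing.lift_algebraMap (g := (toRatFuncHom k l).comp (subPairAux k l i j))
    (fun a b hab => subPairAux_injective i j (toRatFuncHom_injective hab)) p

lemma zv_sub {k : Type} [Field k] {l : ℕ} (a b : Fin l) : (zv a - zv b : RF k l) =
    algebraMap _ _ (MvPolynomial.X a - MvPolynomial.X b : MvPolynomial (Fin l) k) := by
  rw [map_sub]; rfl

lemma X_sub_ne {k : Type} [Field k] {l : ℕ} {a b : Fin l} (h : a ≠ b) :
    (MvPolynomial.X a - MvPolynomial.X b : MvPolynomial (Fin l) k) ≠ 0 := by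
  rw [sub_ne_zero]
  exact fun h' => h (MvPolynomial.X_injective h')

lemma zv_sub_ne {k : Type} [Field k] {l : ℕ} {a b : Fin l} (h : a ≠ b) :
    (zv a - zv b : RF k l) ≠ 0 := by
  rw [zv_sub]
  intro h'
  exact X_sub_ne (k := k) h ((IsFractionRing.injective (MvPolynomial (Fin l) k) (RF k l))
    (by rw [h', map_zero]))

lemma toRF_C {k : Type} [Field k] {l : ℕ} (p : MvPolynomial (Fin l) k) :
    toRatFuncHom k l (Polynomial.C p) = RatFunc.C (algebraMap _ _ p) := by
  simp [toRatFuncHom]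

lemma toRF_X {k : Type} [Field k] {l : ℕ} :
    toRatFuncHom k l Polynomial.X = RatFunc.X := by
  simp [toRatFuncHom]

lemma scaleAux_eval_one {k : Type} [Field k] {l : ℕ} (J : Finset (Fin l))
    (p : MvPolynomial (Fin l) k) : (scaleAux k l J p).eval 1 = p := by
  have h : (Polynomial.evalRingHom (1 : MvPolynomial (Fin l) k)).comp (scaleAux k l J)
      = RingHom.id _ := by
    apply MvPolynomial.ringHom_ext
    · intro r; simp [scaleAux]
    · intro i; by_cases hi : i ∈ J <;> simp [scaleAux, hi]
  exact DFunLike.congr_fun h p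

lemma euler_eval {k : Type} [Field k] {l : ℕ} (D : Fin l → Derivation k (RF k l) (RF k l))
    (hD : IsPartialDeriv D) (p : MvPolynomial (Fin l) k) :
    WW D 1 (algebraMap _ _ p) = algebraMap _ _
      ((Polynomial.derivative (scaleAux k l Finset.univ p)).eval 1) := by
  induction p using MvPolynomial.induction_on with
  | C c =>
    have : algebraMap (MvPolynomial (Fin l) k) (RF k l) (MvPolynomial.C c) =
      algebraMap k (RF k l) c := by
      rw [IsScalarTower.algebraMap_apply k (MvPolynomial (Fin l) k) (RF k l)]; rfl
    rw [this, Derivation.map_algebraMap]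
    have h2 : scaleAux k l Finset.univ (MvPolynomial.C c) = Polynomial.C (MvPolynomial.C c) := by
      simp [scaleAux]
    rw [h2]
    simp
  | add p q hp hq => simp only [map_add, hp, hq, Polynomial.eval_add]
  | mul_X p a hp =>
    have := WW_zv D hD 1 a
    unfold zv at this
    have h2 : scaleAux k l Finset.univ (MvPolynomial.X a) =
      Polynomial.X * Polynomial.C (MvPolynomial.X a) := by
      simp [scaleAux]
    rw [map_mul (algebraMap (MvPolynomial (Fin l) k) (RF k l)), Derivation.leibniz,
      this, hp, map_mul (scaleAux k l Finset.univ), h2, Polynomial.derivative_mul,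
      Polynomial.eval_add, Polynomial.eval_mul, Polynomial.eval_mul]
    simp [scaleAux_eval_one]
    ring

lemma euler_poly {k : Type} [Field k] {l : ℕ} (D : Fin l → Derivation k (RF k l) (RF k l))
    (hD : IsPartialDeriv D) (p : MvPolynomial (Fin l) k) (r : ℤ)
    (h : scaleJ Finset.univ (algebraMap _ _ p) =
      (RatFunc.X : RatFunc (RF k l)) ^ r * RatFunc.C (algebraMap _ _ p)) :
    WW D 1 (algebraMap _ _ p) = r * algebraMap _ _ p := by
  rw [euler_eval D hD]
  rw [scaleJ_alg, ← toRF_C, ← toRF_X] at h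
  obtain ⟨n, rfl | rfl⟩ := r.eq_nat_or_neg
  · rw [zpow_natCast, ← map_pow, ← map_mul] at h
    rw [toRatFuncHom_injective h]
    simp [Polynomial.derivative_mul, Polynomial.derivative_X_pow]
    try ring
  · have h' : toRatFuncHom k l (Polynomial.X ^ n * scaleAux k l Finset.univ p) =
        toRatFuncHom k l (Polynomial.C p) := by
      rw [map_mul, h, map_pow, zpow_neg, zpow_natCast, ← mul_assoc, mul_inv_cancel₀, one_mul]
      rw [toRF_X]
      exact pow_ne_zero _ RatFunc.X_ne_zero
    have h2 := congrArg (fun F => Polynomial.eval 1 (Polynomial.derivative F))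
      (toRatFuncHom_injective h')
    simp [Polynomial.derivative_mul, Polynomial.derivative_X_pow, scaleAux_eval_one] at h2
    have h3 := congrArg (algebraMap (MvPolynomial (Fin l) k) (RF k l)) h2
    rw [map_add, map_mul, map_natCast, map_zero] at h3
    push_cast
    linear_combination h3

/-- homogeneous of degree `d`, in both senses. -/
def Good {k : Type} [Field k] {l : ℕ} (D : Fin l → Derivation k (RF k l) (RF k l))
    (x : RF k l) (d : ℤ) : Prop :=
  x ≠ 0 ∧ scaleJ Finset.univ x = RatFunc.X ^ d * RatFunc.C x ∧ WW D 1 x = d * x ∧ WW D 0 x = 0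

lemma Good.one {k : Type} [Field k] {l : ℕ} (D : Fin l → Derivation k (RF k l) (RF k l)) :
    Good D 1 0 := by
  refine ⟨one_ne_zero, by simp, by simp, by simp⟩

lemma Good.mul {k : Type} [Field k] {l : ℕ} {D : Fin l → Derivation k (RF k l) (RF k l)}
    {x y : RF k l} {a b : ℤ} (hx : Good D x a) (hy : Good D y b) : Good D (x * y) (a + b) := by
  refine ⟨mul_ne_zero hx.1 hy.1, ?_, ?_, ?_⟩
  · rw [map_mul, hx.2.1, hy.2.1, zpow_add₀ RatFunc.X_ne_zero, map_mul]; ring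
  · rw [Derivation.leibniz, hx.2.2.1, hy.2.2.1]; push_cast; simp only [smul_eq_mul]; ring
  · rw [Derivation.leibniz, hx.2.2.2, hy.2.2.2]; simp

lemma Good.zpow {k : Type} [Field k] {l : ℕ} {D : Fin l → Derivation k (RF k l) (RF k l)}
    {x : RF k l} {a : ℤ} (hx : Good D x a) (n : ℤ) : Good D (x ^ n) (a * n) := by
  refine ⟨zpow_ne_zero _ hx.1, ?_, ?_, ?_⟩
  · rw [map_zpow₀, hx.2.1, mul_zpow, map_zpow₀, zpow_mul]
  · rw [Derivation.leibniz_zpow, hx.2.2.1]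
    have : x ^ n = x ^ (n - 1) * x := by
      rw [← zpow_add_one₀ hx.1]; simp
    rw [this]
    simp only [smul_eq_mul, zsmul_eq_mul]; push_cast; ring
  · rw [Derivation.leibniz_zpow, hx.2.2.2]; simp

lemma Good.prod {k : Type} [Field k] {l : ℕ} {D : Fin l → Derivation k (RF k l) (RF k l)}
    {ι : Type} (s : Finset ι) {f : ι → RF k l}
    (hf : ∀ a ∈ s, ∃ m, Good D (f a) m) : ∃ m, Good D (∏ a ∈ s, f a) m := by
  induction s using Finset.induction_on with
  | empty => exact ⟨0, by simpa using Good.one D⟩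
  | insert a s ha ih =>
    rw [Finset.prod_insert ha]
    obtain ⟨m, hm⟩ := hf a (by simp)
    obtain ⟨n, hn⟩ := ih fun b hb => hf b (by simp [hb])
    exact ⟨_, hm.mul hn⟩

lemma good_PP {k : Type} [Field k] {l : ℕ} (D : Fin l → Derivation k (RF k l) (RF k l))
    (hD : IsPartialDeriv D) (e : Fin l → Fin l → ℤ) : ∃ m, Good D (PP k l e) m := by
  unfold PP
  apply Good.prod
  intro a _
  apply Good.prod
  intro b _
  by_cases hab : a < b
  · rw [if_pos hab]
    refine ⟨_, Good.zpow (a := 1) ⟨zv_sub_ne hab.ne, ?_, ?_, ?_⟩ _⟩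
    · rw [zv_sub, scaleJ_alg, ← toRF_C, ← toRF_X, zpow_one, ← map_mul]
      congr 1
      simp [scaleAux]
      ring
    · rw [map_sub, WW_zv D hD, WW_zv D hD]; simp
    · rw [map_sub, WW_zv D hD, WW_zv D hD]; simp
  · rw [if_neg hab]
    exact ⟨0, Good.one D⟩

lemma PP_add {k : Type} [Field k] {l : ℕ} (e f : Fin l → Fin l → ℤ) :
    PP k l (fun a b => e a b + f a b) = PP k l e * PP k l f := by
  unfold PP
  rw [← Finset.prod_mul_distrib]
  refine Finset.prod_congr rfl fun a _ => ?_
  rw [← Finset.prod_mul_distrib]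
  refine Finset.prod_congr rfl fun b _ => ?_
  by_cases hab : a < b
  · simp only [if_pos hab]
    rw [zpow_add₀ (zv_sub_ne hab.ne)]
  · simp [hab]

lemma PP_single {k : Type} [Field k] {l : ℕ} (i j : Fin l) (hij : i < j) (n : ℤ) :
    PP k l (fun a b => if a = i then (if b = j then n else 0) else 0) = (zv i - zv j) ^ n := by
  unfold PP
  rw [Finset.prod_eq_single i, Finset.prod_eq_single j]
  · simp [hij]
  · intro b _ hb; simp [hb]
  · simp
  · intro a _ ha; simp [ha]
  · simp

lemma trans_inv {k : Type} [Field k] [CharZero k] {l : ℕ} (q : MvPolynomial (Fin l) k)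
    (hq : dd k l q = 0) (j : Fin l) :
    MvPolynomial.aeval (R := k) (fun a => (MvPolynomial.X a - MvPolynomial.X j :
      MvPolynomial (Fin l) k)) q = q := by
  let τ : MvPolynomial (Fin l) k →ₐ[k] Polynomial (MvPolynomial (Fin l) k) :=
    MvPolynomial.aeval (R := k) (fun a => Polynomial.C (MvPolynomial.X a) + Polynomial.X)
  have hX : ∀ a, τ (MvPolynomial.X a) = Polynomial.C (MvPolynomial.X a) + Polynomial.X := by
    intro a; simp [τ]
  have hC : ∀ c, τ (MvPolynomial.C c) = Polynomial.C (MvPolynomial.C c) := by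
    intro a; simp [τ]
  have hτ : ∀ p, Polynomial.derivative (τ p) = τ (dd k l p) := by
    intro p
    induction p using MvPolynomial.induction_on with
    | C c => rw [hC]; simp [dd]
    | add p q hp hq => simp only [map_add, hp, hq]
    | mul_X p a hp =>
      rw [map_mul, Polynomial.derivative_mul, hp, hX, Derivation.leibniz, dd_X]
      simp [hX]; ring
  have hev : ∀ c p, (τ p).eval c = MvPolynomial.aeval (R := k) (fun a => (MvPolynomial.X a + c :
      MvPolynomial (Fin l) k)) p := by
    intro c p
    induction p using MvPolynomial.induction_on with
    | C c => rw [hC]; simp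
    | add p q hp hq => simp only [map_add, hp, hq, Polynomial.eval_add]
    | mul_X p a hp => rw [map_mul, Polynomial.eval_mul, hp, hX]; simp
  have h0 := hτ q
  rw [hq, map_zero] at h0
  have h1 := Polynomial.eq_C_of_derivative_eq_zero h0
  have h2 := hev (-MvPolynomial.X j) q
  have h3 := hev 0 q
  rw [h1, Polynomial.eval_C] at h2 h3
  simp only [add_zero] at h3
  simp only [← sub_eq_add_neg] at h2
  rw [← h2, h3]
  exact MvPolynomial.aeval_X_left_apply q

lemma sub_coeff_ne {k : Type} [Field k] {l : ℕ} (i j : Fin l) (q : MvPolynomial (Fin l) k)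
    (hq : ¬ (MvPolynomial.X i - MvPolynomial.X j) ∣ q) : (subPairAux k l i j q).coeff 0 ≠ 0 := by
  intro h0
  apply hq
  have h : (Polynomial.evalRingHom (MvPolynomial.X i - MvPolynomial.X j)).comp
      (subPairAux k l i j) = RingHom.id _ := by
    apply MvPolynomial.ringHom_ext
    · intro r; simp [subPairAux]
    · intro s; by_cases hs : s = i <;> simp [subPairAux, hs]
  obtain ⟨F, hF⟩ := Polynomial.X_dvd_iff.mpr h0
  have h1 := DFunLike.congr_fun h q
  simp only [RingHom.comp_apply, RingHom.id_apply, hF] at h1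
  rw [← h1]
  simp

lemma scale_coeff_ne {k : Type} [Field k] [CharZero k] {l : ℕ} (i j : Fin l)
    (q : MvPolynomial (Fin l) k) (hd : dd k l q = 0) (hq : (subPairAux k l i j q).coeff 0 ≠ 0) :
    (scaleAux k l {i, j} q).coeff 0 ≠ 0 := by
  intro h0
  apply hq
  rw [Polynomial.coeff_zero_eq_eval_zero] at h0 ⊢
  let θ : MvPolynomial (Fin l) k →ₐ[k] MvPolynomial (Fin l) k :=
    MvPolynomial.aeval (R := k) (fun a => MvPolynomial.X a - MvPolynomial.X j)
  have key : ((Polynomial.evalRingHom 0).comp (subPairAux k l i j)).comp θ.toRingHom =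
      θ.toRingHom.comp ((Polynomial.evalRingHom 0).comp (scaleAux k l {i, j})) := by
    apply MvPolynomial.ringHom_ext
    · intro r; simp [subPairAux, scaleAux, θ]
    · intro s
      by_cases hs : s = i
      · subst hs
        by_cases hj : j = s <;> simp [subPairAux, scaleAux, θ, hj]
      · by_cases hj : s = j
        · subst hj; simp [subPairAux, scaleAux, θ]
        · by_cases hji : j = i <;> simp [subPairAux, scaleAux, θ, hs, hj, hji]
  have h1 := DFunLike.congr_fun key q
  have h2 : θ q = q := trans_inv q hd j
  simp only [RingHom.comp_apply, AlgHom.toRingHom_eq_coe, RingHom.coe_coe, h2,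
    Polynomial.coe_evalRingHom, h0, map_zero] at h1
  exact h1

/-- for `l ≥ 3`, `α ∈ R^l` and `1 ≤ i < j ≤ l` one has
`ord_{ij}α ≥ -4`; and if moreover `α ∈ R₀^l`, then `ord_{ij}α ≥ -2`. -/
theorem statement8 {k : Type} [Field k] [CharZero k] {l : ℕ} (hl : 3 ≤ l)
    (D : Fin l → Derivation k (RF k l) (RF k l)) (hD : IsPartialDeriv D)
    (α : RF k l) (hadm : Admissible D Finset.univ α)
    (i j : Fin l) (hij : i < j) :
    (∀ m : ℤ, m < -4 → rho i j m α = 0) ∧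
    (AdmissibleInd D Finset.univ α → ∀ m : ℤ, m < -2 → rho i j m α = 0) := by
  by_cases hα : α = 0
  · subst hα
    have : ∀ m : ℤ, rho i j m (0 : RF k l) = 0 := by
      intro m; unfold rho lcoeff; rw [map_zero, map_zero]; rfl
    exact ⟨fun m _ => this m, fun _ m _ => this m⟩
  obtain ⟨⟨p, e, hpe⟩, -, hreg, hhom, hcomp⟩ := hadm
  -- normal form
  obtain ⟨q, e', hq, hα'⟩ : ∃ (q : MvPolynomial (Fin l) k) (e' : Fin l → Fin l → ℤ),
      ¬ (MvPolynomial.X i - MvPolynomial.X j) ∣ q ∧ α = algebraMap _ _ q * PP k l e' := by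
    have hp : p ≠ 0 := by
      rintro rfl
      apply hα; rw [hpe, map_zero, zero_mul]
    have hu : ¬ IsUnit (MvPolynomial.X i - MvPolynomial.X j : MvPolynomial (Fin l) k) := by
      intro hu
      have := hu.map (MvPolynomial.aeval (R := k) (fun _ => (0 : k)))
      simp at this
    obtain ⟨n, q, hq, hpq⟩ := WfDvdMonoid.max_power_factor' hp hu
    refine ⟨q, fun a b => e a b + (if a = i then (if b = j then (n : ℤ) else 0) else 0), hq, ?_⟩
    rw [PP_add, PP_single i j hij, hpe, hpq, map_mul, map_pow, ← zv_sub, zpow_natCast]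
    unfold PP
    ring
  have hq0 : q ≠ 0 := by rintro rfl; simp at hq
  have hqa : algebraMap (MvPolynomial (Fin l) k) (RF k l) q ≠ 0 := by simpa using hq0
  obtain ⟨r, hPP⟩ := good_PP D hD e'
  -- Euler
  have hEu : WW D 1 α = -(2 * l) * α := by
    unfold IsHomogeneousOn at hhom
    have h1 : scaleJ Finset.univ (algebraMap _ _ q) =
        (RatFunc.X : RatFunc (RF k l)) ^ (-(2 * (l : ℤ)) - r) * RatFunc.C (algebraMap (MvPolynomial (Fin l) k) _ q) := by
      rw [hα', map_mul, hPP.2.1, map_mul, Finset.card_univ, Fintype.card_fin] at hhom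
      rw [zpow_sub₀ RatFunc.X_ne_zero]
      have hX : (RatFunc.X : RatFunc (RF k l)) ^ r ≠ 0 := zpow_ne_zero _ RatFunc.X_ne_zero
      have hC : (RatFunc.C (PP k l e') : RatFunc (RF k l)) ≠ 0 := by
        simpa using hPP.1
      apply mul_right_cancel₀ (mul_ne_zero hX hC)
      rw [hhom]
      field_simp
    have h2 := euler_poly D hD q _ h1
    rw [hα', Derivation.leibniz, h2, hPP.2.2.1]
    push_cast
    simp only [smul_eq_mul]
    ring
  have hE : EE D α = 0 := by
    rw [← hreg]
    unfold EE
    rw [WW_apply, Finset.sum_add_distrib, ← Finset.sum_mul, ← Finset.mul_sum]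
  have hit : ∀ n, (WW D 0)^[n] α = algebraMap _ _ ((dd k l)^[n] q) * PP k l e' := by
    intro n
    induction n with
    | zero => exact hα'
    | succ n ih =>
      rw [Function.iterate_succ_apply', Function.iterate_succ_apply', ih, Derivation.leibniz,
        hPP.2.2.2, dd_alg D hD]
      simp only [smul_eq_mul]
      ring
  obtain ⟨N, hN⟩ := dd_nil q
  have hΔ : WW D 0 α = 0 := by
    apply sl2 D hD α hE hEu N
    rw [hit, hN N le_rfl, map_zero, zero_mul]
  have hdq : dd k l q = 0 := by
    have h1 := hit 1
    simp only [Function.iterate_one] at h1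
    rw [hΔ] at h1
    have h2 := (mul_eq_zero.mp h1.symm).resolve_right hPP.1
    simpa using h2
  have c1 := sub_coeff_ne i j q hq
  have c2 := scale_coeff_ne i j q hdq c1
  have hs : HasOrd (subPair i j α) (e' i j) := by
    rw [hα']
    refine hasOrd_main (subPairAux k l i j) _ (subPair_alg i j) i j hij 1 one_ne_zero ?_ ?_ q c1 e'
    · simp [subPairAux, hij.ne']
    · intro a b hab hne
      rw [Polynomial.coeff_zero_eq_eval_zero]
      have he : ∀ c : Fin l, (subPairAux k l i j (MvPolynomial.X c)).eval 0 =
          MvPolynomial.X (if c = i then j else c) := by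
        intro c; by_cases hci : c = i <;> simp [subPairAux, hci]
      rw [map_sub, Polynomial.eval_sub, he, he]
      apply X_sub_ne
      split_ifs with h1 h2 h2
      · subst h1 h2; exact absurd hab (lt_irrefl _)
      · intro h3; exact hne ⟨h1, h3.symm⟩
      · subst h2; intro h3; subst h3; exact absurd hab hij.asymm
      · exact hab.ne
  have hc : HasOrd (scaleJ {i, j} α) (e' i j) := by
    rw [hα']
    refine hasOrd_main (scaleAux k l {i, j}) _ (scaleJ_alg _) i j hij _
      (X_sub_ne hij.ne) ?_ ?_ q c2 e'
    · simp [scaleAux]; ring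
    · intro a b hab hne
      rw [Polynomial.coeff_zero_eq_eval_zero]
      have he : ∀ c : Fin l, (scaleAux k l {i, j} (MvPolynomial.X c)).eval 0 =
          if c = i ∨ c = j then 0 else MvPolynomial.X c := by
        intro c; by_cases hci : c = i ∨ c = j <;> simp [scaleAux, hci]
      rw [map_sub, Polynomial.eval_sub, he, he]
      split_ifs with h1 h2 h2
      · exfalso
        rcases h1 with rfl | rfl <;> rcases h2 with rfl | rfl
        · exact lt_irrefl _ hab
        · exact hne ⟨rfl, rfl⟩
        · exact hab.asymm hij
        · exact lt_irrefl _ hab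
      · rw [zero_sub]; exact neg_ne_zero.mpr (MvPolynomial.X_ne_zero b)
      · rw [sub_zero]; exact MvPolynomial.X_ne_zero a
      · exact X_sub_ne hab.ne
  have hcc : ∀ n, component {i, j} (fun _ => 2) n α = lcoeff (n - 4) (scaleJ {i, j} α) := by
    intro n
    unfold component
    rw [Finset.sum_pair hij.ne]
    rfl
  have hne : ∀ n, n = e' i j + 4 → component {i, j} (fun _ => 2) n α ≠ 0 := by
    rintro n rfl
    rw [hcc, add_sub_cancel_right]
    exact hc.lcoeff_ne
  have h4 : ¬ (e' i j + 4 < 0 ∨ e' i j + 4 = 1) :=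
    fun h => hne _ rfl (hcomp {i, j} (Finset.subset_univ _) _ h)
  push Not at h4
  refine ⟨fun m hm => hs.lcoeff_lt (by omega), fun hind m hm => hs.lcoeff_lt ?_⟩
  have h5 : e' i j + 4 ≠ 0 := by
    intro h
    refine hne _ h.symm (hind.2 {i, j} (Finset.subset_univ _) (by simp) ?_)
    intro h6
    have := congrArg Finset.card h6
    rw [Finset.card_pair hij.ne, Finset.card_univ, Fintype.card_fin] at this
    omega
  omega

end Griess
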